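/- Let (E,μ) be a measure space and g a bounded measurable function on E such that for some constants C > 0 and δ > 0, for all a > 0 one has μ({x ∈ E : |g(x)| < a}) ≤ C a^δ. Let M = sup_E |g| and take ε = δ. Then there is a constant D > 0, depending only on ε, such that for all λ ≠ 0, ∫_E min(1, |λ g(x)|^{−ε}) dμ(x) ≤ C·D·(1 + log₊(M|λ|))·|λ|^{−δ}. -/

import Mathlib

open MeasureTheory

/-!
With `t ^ (-δ)` read as `+∞` at `t = 0`, one has `min 1 (t ^ (-δ)) = (max 1 t) ^ (-δ)`. Hence,
with `L = |lam|`, the integrand is `h = (max 1 (L |g|)) ^ (-δ)`, and the small-ball hypothesis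
puts it in weak `L¹` with constant `A = C L ^ (-δ)`, that is, `μ {h > s} ≤ A / s`. As `h ≤ 1`,
the layer-cake formula gives `∫ h ≤ ∫₀¹ min (μ E, A / s) ds ≤ A (1 + log (1 / m))` as soon as
`m μ E ≤ A`. Finally `g` is essentially bounded by `M`, so the small-ball hypothesis also bounds
`μ E`, and `m = (e max (1, M L)) ^ (-δ)` is admissible.
-/

section WeakType

variable {α : Type*} [MeasurableSpace α] {μ : Measure α}

lemma lintegral_ofReal_le_lintegral_meas_lt (f : α → ℝ) :
    ∫⁻ x, ENNReal.ofReal (f x) ∂μ ≤ ∫⁻ t in Set.Ioi 0, μ {x | t < f x} := by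
  -- The lower integral of `f` is attained by a measurable minorant `φ`, which has a layer cake.
  obtain ⟨φ, hφ, hφf, hint⟩ := exists_measurable_le_lintegral_eq μ fun x => ENNReal.ofReal (f x)
  have hφ_top (x : α) : φ x ≠ ⊤ := ne_top_of_le_ne_top ENNReal.ofReal_ne_top (hφf x)
  calc
    ∫⁻ x, ENNReal.ofReal (f x) ∂μ = ∫⁻ x, ENNReal.ofReal (φ x).toReal ∂μ := by
      simp only [hint, ENNReal.ofReal_toReal (hφ_top _)]
    _ = ∫⁻ t in Set.Ioi 0, μ {x | t < (φ x).toReal} :=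
      lintegral_eq_lintegral_meas_lt μ (.of_forall fun _ => ENNReal.toReal_nonneg)
        hφ.ennreal_toReal.aemeasurable
    _ ≤ ∫⁻ t in Set.Ioi 0, μ {x | t < f x} := by
      refine setLIntegral_mono' measurableSet_Ioi fun t ht => measure_mono fun x hx => ?_
      exact (ENNReal.ofReal_lt_ofReal_iff_of_nonneg (le_of_lt ht)).1 <|
        ((ENNReal.ofReal_lt_iff_lt_toReal (le_of_lt ht) (hφ_top x)).2 hx).trans_le (hφf x)

lemma setLIntegral_Ioc_ofReal_inv {a b : ℝ} (ha : 0 < a) (hab : a ≤ b) :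
    ∫⁻ t in Set.Ioc a b, (ENNReal.ofReal t)⁻¹ = ENNReal.ofReal (Real.log (b / a)) := by
  have hpos : ∀ t ∈ Set.Ioc a b, 0 < t := fun t ht => ha.trans ht.1
  have hint : IntegrableOn (fun t : ℝ => t⁻¹) (Set.Ioc a b) :=
    (intervalIntegrable_iff_integrableOn_Ioc_of_le hab).1 <|
      intervalIntegral.intervalIntegrable_inv
        (fun t ht => (ha.trans_le (Set.uIcc_of_le hab ▸ ht).1).ne') continuousOn_id
  rw [← integral_inv_of_pos ha (ha.trans_le hab), intervalIntegral.integral_of_le hab,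
    ofReal_integral_eq_lintegral_ofReal hint]
  · exact setLIntegral_congr_fun measurableSet_Ioc fun t ht =>
      (ENNReal.ofReal_inv_of_pos (hpos t ht)).symm
  · exact ae_restrict_of_forall_mem measurableSet_Ioc fun t ht => (inv_pos.2 (hpos t ht)).le

lemma lintegral_ofReal_le_of_weak_type_one {f : α → ℝ} {A : ENNReal} {m B : ℝ} (hm : 0 < m)
    (hmB : m ≤ B) (hfB : ∀ᵐ x ∂μ, f x ≤ B) (huniv : ENNReal.ofReal m * μ Set.univ ≤ A)
    (hweak : ∀ t, 0 < t → μ {x | t < f x} ≤ A * (ENNReal.ofReal t)⁻¹) :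
    ∫⁻ x, ENNReal.ofReal (f x) ∂μ ≤ A * ENNReal.ofReal (1 + Real.log (B / m)) := by
  have h_low : ∫⁻ t in Set.Ioc 0 m, μ {x | t < f x} ≤ A :=
    calc
      _ ≤ ∫⁻ _ in Set.Ioc 0 m, μ Set.univ :=
        lintegral_mono fun _ => measure_mono (Set.subset_univ _)
      _ = ENNReal.ofReal m * μ Set.univ := by
        rw [setLIntegral_const, Real.volume_Ioc, sub_zero, mul_comm]
      _ ≤ A := huniv
  have h_mid : ∫⁻ t in Set.Ioc m B, μ {x | t < f x} ≤ A * ENNReal.ofReal (Real.log (B / m)) := by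
    rw [← setLIntegral_Ioc_ofReal_inv hm hmB, ← lintegral_const_mul A (by fun_prop)]
    exact setLIntegral_mono' measurableSet_Ioc fun t ht => hweak t (hm.trans ht.1)
  have h_high : ∫⁻ t in Set.Ioi B, μ {x | t < f x} = 0 := by
    refine setLIntegral_eq_zero measurableSet_Ioi fun t ht => measure_eq_zero_iff_ae_notMem.2 ?_
    filter_upwards [hfB] with x hx using (hx.trans_lt ht).not_gt
  have hlog : 0 ≤ Real.log (B / m) := Real.log_nonneg ((one_le_div hm).2 hmB)
  calc
    ∫⁻ x, ENNReal.ofReal (f x) ∂μ ≤ ∫⁻ t in Set.Ioi 0, μ {x | t < f x} :=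
      lintegral_ofReal_le_lintegral_meas_lt f
    _ ≤ (∫⁻ t in Set.Ioc 0 m, μ {x | t < f x}) + ((∫⁻ t in Set.Ioc m B, μ {x | t < f x}) +
        ∫⁻ t in Set.Ioi B, μ {x | t < f x}) := by
      rw [← Set.Ioc_union_Ioi_eq_Ioi hm.le, ← Set.Ioc_union_Ioi_eq_Ioi hmB]
      exact (lintegral_union_le _ _ _).trans (add_le_add_right (lintegral_union_le _ _ _) _)
    _ ≤ A + A * ENNReal.ofReal (Real.log (B / m)) := by
      rw [h_high, add_zero]
      exact add_le_add h_low h_mid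
    _ = A * ENNReal.ofReal (1 + Real.log (B / m)) := by
      rw [ENNReal.ofReal_add zero_le_one hlog, ENNReal.ofReal_one, mul_add, mul_one]

lemma ite_min_one_rpow_neg_eq_max_one_rpow_neg {δ t : ℝ} (hδ : 0 ≤ δ) (ht : 0 ≤ t) :
    (if t = 0 then 1 else min 1 (t ^ (-δ))) = max 1 t ^ (-δ) := by
  rcases ht.eq_or_lt' with rfl | ht
  · simp
  rw [if_neg ht.ne']
  rcases le_total t 1 with h | h
  · rw [max_eq_left h, Real.one_rpow,
      min_eq_left (Real.one_le_rpow_of_pos_of_le_one_of_nonpos ht h (neg_nonpos.2 hδ))]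
  · rw [max_eq_right h, min_eq_right (Real.rpow_le_one_of_one_le_of_nonpos h (neg_nonpos.2 hδ))]

lemma meas_lt_max_one_rpow_neg_le {f : α → ℝ} {A : ENNReal} {δ t : ℝ} (hδ : 0 < δ) (ht : 0 < t)
    (hsmall : ∀ a, 0 < a → μ {x | f x < a} ≤ A * ENNReal.ofReal (a ^ δ)) :
    μ {x | t < max 1 (f x) ^ (-δ)} ≤ A * (ENNReal.ofReal t)⁻¹ := by
  have hsubset : {x | t < max 1 (f x) ^ (-δ)} ⊆ {x | f x < t ^ (-δ)⁻¹} := fun x hx =>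
    (le_max_right 1 (f x)).trans_lt <|
      (Real.lt_rpow_inv_iff_of_neg (by positivity) ht (neg_lt_zero.2 hδ)).2 hx
  have hpow : (t ^ (-δ)⁻¹) ^ δ = t⁻¹ := by
    rw [← Real.rpow_mul ht.le, inv_neg, neg_mul, inv_mul_cancel₀ hδ.ne', Real.rpow_neg_one]
  calc
    _ ≤ μ {x | f x < t ^ (-δ)⁻¹} := measure_mono hsubset
    _ ≤ A * ENNReal.ofReal ((t ^ (-δ)⁻¹) ^ δ) := hsmall _ (by positivity)
    _ = A * (ENNReal.ofReal t)⁻¹ := by rw [hpow, ENNReal.ofReal_inv_of_pos ht]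

lemma lintegral_max_one_rpow_neg_le {f : α → ℝ} {A : ENNReal} {δ T : ℝ} (hδ : 0 < δ) (hT : 1 ≤ T)
    (hfT : ∀ᵐ x ∂μ, f x ≤ T)
    (hsmall : ∀ a, 0 < a → μ {x | f x < a} ≤ A * ENNReal.ofReal (a ^ δ)) :
    ∫⁻ x, ENNReal.ofReal (max 1 (f x) ^ (-δ)) ∂μ ≤
      A * ENNReal.ofReal ((1 + δ) * (1 + Real.log T)) := by
  have hT0 : 0 < T := one_pos.trans_le hT
  -- The factor `e` makes `f < a` hold almost everywhere, at the cost of only `δ` in the logarithm.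
  set a := Real.exp 1 * T
  have hTa : T < a := lt_mul_of_one_lt_left hT0 (Real.one_lt_exp_iff.2 one_pos)
  have ha : 0 < a := hT0.trans hTa
  have huniv : ENNReal.ofReal (a ^ (-δ)) * μ Set.univ ≤ A := by
    have hfa : μ {x | f x < a} = μ Set.univ :=
      measure_congr <| Filter.eventuallyEq_univ.2 <| hfT.mono fun x hx => hx.trans_lt hTa
    calc
      _ ≤ ENNReal.ofReal (a ^ (-δ)) * (A * ENNReal.ofReal (a ^ δ)) := by
        rw [← hfa]
        gcongr
        exact hsmall a ha
      _ = A * ENNReal.ofReal (a ^ (-δ) * a ^ δ) := by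
        rw [mul_left_comm, ENNReal.ofReal_mul (by positivity)]
      _ = A := by
        rw [← Real.rpow_add ha, neg_add_cancel, Real.rpow_zero, ENNReal.ofReal_one, mul_one]
  have hlog : Real.log (1 / a ^ (-δ)) = δ * (1 + Real.log T) := by
    rw [one_div, Real.log_inv, Real.log_rpow ha, Real.log_mul (Real.exp_pos 1).ne' hT0.ne',
      Real.log_exp]
    ring
  have hle_one {t : ℝ} (ht : 1 ≤ t) : t ^ (-δ) ≤ 1 :=
    Real.rpow_le_one_of_one_le_of_nonpos ht (neg_nonpos.2 hδ.le)
  calc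
    _ ≤ A * ENNReal.ofReal (1 + Real.log (1 / a ^ (-δ))) :=
      lintegral_ofReal_le_of_weak_type_one (by positivity) (hle_one (hT.trans hTa.le))
        (.of_forall fun x => hle_one (le_max_left 1 (f x))) huniv
        fun t ht => meas_lt_max_one_rpow_neg_le hδ ht hsmall
    _ ≤ A * ENNReal.ofReal ((1 + δ) * (1 + Real.log T)) := by
      rw [hlog]
      gcongr
      linarith [Real.log_nonneg hT]

lemma meas_mul_lt_le {f : α → ℝ} {C δ L : ℝ} (hL : 0 < L)
    (hsmall : ∀ a, 0 < a → μ {x | f x < a} ≤ ENNReal.ofReal (C * a ^ δ)) {a : ℝ} (ha : 0 < a) :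
    μ {x | L * f x < a} ≤ ENNReal.ofReal (C * L ^ (-δ)) * ENNReal.ofReal (a ^ δ) := by
  have hset : {x | L * f x < a} = {x | f x < a / L} :=
    Set.ext fun x => (lt_div_iff₀' hL).symm
  have hpow : C * (a / L) ^ δ = C * L ^ (-δ) * a ^ δ := by
    rw [Real.div_rpow ha.le hL.le, Real.rpow_neg hL.le]
    ring
  rw [hset, ← ENNReal.ofReal_mul' (by positivity), ← hpow]
  exact hsmall _ (by positivity)

end WeakType

theorem stmt8_general {𝕜 F E : Type*} [NormedField 𝕜] [NormedAddCommGroup F] [NormedSpace 𝕜 F]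
    [DecidableEq F] [MeasurableSpace E] {μ : Measure E} {g : E → F} {C δ : ℝ} (hδ : 0 < δ)
    (hbdd : (ae μ).IsBoundedUnder (· ≤ ·) fun x => ‖g x‖)
    (hsmall : ∀ a, 0 < a → μ {x | ‖g x‖ < a} ≤ ENNReal.ofReal (C * a ^ δ)) {c : 𝕜} (hc : c ≠ 0) :
    ∫⁻ x, ENNReal.ofReal (if g x = 0 then 1 else min 1 (‖c • g x‖ ^ (-δ))) ∂μ ≤
      ENNReal.ofReal (C * (1 + δ) *
        (1 + max (Real.log (essSup (fun x => ‖g x‖) μ * ‖c‖)) 0) * ‖c‖ ^ (-δ)) := by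
  set M := essSup (fun x => ‖g x‖) μ
  have hc' : 0 < ‖c‖ := norm_pos_iff.2 hc
  have hlog : Real.log (max 1 (M * ‖c‖)) ≤ max (Real.log (M * ‖c‖)) 0 := by
    rcases max_choice 1 (M * ‖c‖) with h | h <;> simp [h]
  have hM : ∀ᵐ x ∂μ, ‖c‖ * ‖g x‖ ≤ max 1 (M * ‖c‖) := by
    filter_upwards [ae_le_essSup hbdd] with x hx
    exact le_max_of_le_right (mul_comm M ‖c‖ ▸ mul_le_mul_of_nonneg_left hx hc'.le)
  have hintegrand (x : E) : (if g x = 0 then 1 else min 1 (‖c • g x‖ ^ (-δ))) =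
      max 1 (‖c‖ * ‖g x‖) ^ (-δ) := by
    rw [← ite_min_one_rpow_neg_eq_max_one_rpow_neg hδ.le (by positivity), norm_smul]
    simp only [mul_eq_zero, hc'.ne', norm_eq_zero, false_or]
  calc
    _ = ∫⁻ x, ENNReal.ofReal (max 1 (‖c‖ * ‖g x‖) ^ (-δ)) ∂μ := by simp only [hintegrand]
    _ ≤ ENNReal.ofReal (C * ‖c‖ ^ (-δ)) *
        ENNReal.ofReal ((1 + δ) * (1 + Real.log (max 1 (M * ‖c‖)))) :=
      lintegral_max_one_rpow_neg_le hδ (le_max_left _ _) hM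
        fun _ ha => meas_mul_lt_le hc' hsmall ha
    _ ≤ ENNReal.ofReal (C * ‖c‖ ^ (-δ)) *
        ENNReal.ofReal ((1 + δ) * (1 + max (Real.log (M * ‖c‖)) 0)) := by gcongr
    _ = _ := by
      rw [← ENNReal.ofReal_mul' (by positivity)]
      congr 1
      ring

/-- **Lemma 3.1, case ε = δ.** Let `δ > 0` and take `ε = δ`. There is a constant `D > 0`
depending only on `δ` such that: for every measure space `(E,μ)`, every bounded measurable
`g : E → ℝ`, and every `C > 0` with `μ{x : |g(x)| < a} ≤ C aᵟ` for all `a > 0`, writing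
`M = esssup_E |g|`, one has `∫_E min(1, |λ g|^{-δ}) dμ ≤ C·D·(1 + log₊(M|λ|))·|λ|^{-δ}` for
all `λ ≠ 0`. The integrand is interpreted as `1` where `g(x) = 0`, and
`log₊ t = max (log t) 0`. -/
theorem stmt8 (δ : ℝ) (hδ : 0 < δ) :
    ∃ D : ℝ, 0 < D ∧
      ∀ (E : Type*) [MeasurableSpace E] (μ : Measure E) (g : E → ℝ), Measurable g →
      (∃ M₀ : ℝ, ∀ x, |g x| ≤ M₀) →
      ∀ C : ℝ, 0 < C →
      (∀ a : ℝ, 0 < a → μ {x | |g x| < a} ≤ ENNReal.ofReal (C * a ^ δ)) →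
      ∀ lam : ℝ, lam ≠ 0 →
        (∫⁻ x, ENNReal.ofReal
            (if g x = 0 then (1 : ℝ) else min 1 (|lam * g x| ^ (-δ))) ∂μ) ≤
          ENNReal.ofReal (C * D *
            (1 + max (Real.log (essSup (fun x => |g x|) μ * |lam|)) 0) * |lam| ^ (-δ)) := by
  refine ⟨1 + δ, by positivity, fun _ _ _ g _ ⟨M₀, hM₀⟩ _ _ hsmall lam hlam => ?_⟩
  exact stmt8_general (g := g) (c := lam) hδ (Filter.isBoundedUnder_of ⟨M₀, hM₀⟩) hsmall hlam
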